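/- Let P ≥ 1, 1 ≤ n < P, and let F ⊆ Fin P with |F| = P − n, and U any unitary on a finite-dimensional complex target space. Let S ⊆ (Fin P → Bool) be a set of control strings with |S| = 2^n all agreeing on every coordinate of F with common pattern ã. Then the product over S (in any order) of the controlled-U gates C_a(U) = |a⟩⟨a| ⊗ U + (1 − |a⟩⟨a|) ⊗ 1 equals Q ⊗ U + (1 − Q) ⊗ 1, where Q = ∑_{b : b i = ã i for all i ∈ F} |b⟩⟨b|. In particular, 2^n shift operations controlled on a subcube of data items can be combined into a single shift controlled only on the fixed bits. -/

import Mathlib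

/-!
If `p * q = 0`, the term of the product of the gates controlled on `p` and `q` in which both copies
of `U` act is `(p * q) ⊗ U² = 0`, so the product is the gate controlled on `p + q`. Distinct basis
projectors are orthogonal, hence a product over distinct control strings is the gate controlled on
the sum of their projectors. Finally, a subset of a subcube with as many elements as the subcube is
all of it.
-/

open Matrix
open scoped Kronecker

/-- The rank-one orthogonal projector `|a⟩⟨a|` onto the computational basis state
indexed by the binary string `a : Fin P → Bool`. -/
noncomputable def ketBraProj (P : ℕ) (a : Fin P → Bool) :
    Matrix (Fin P → Bool) (Fin P → Bool) ℂ :=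
  Matrix.of fun x y => if x = a ∧ y = a then 1 else 0

/-- The multi-controlled-`U` gate with control string `a`:
`C_a(U) = |a⟩⟨a| ⊗ U + (1 - |a⟩⟨a|) ⊗ 1`. -/
noncomputable def ctrlU (P : ℕ) {γ : Type*} [Fintype γ] [DecidableEq γ]
    (a : Fin P → Bool) (U : Matrix γ γ ℂ) :
    Matrix ((Fin P → Bool) × γ) ((Fin P → Bool) × γ) ℂ :=
  ketBraProj P a ⊗ₖ U + (1 - ketBraProj P a) ⊗ₖ 1

section ControlledGate

variable {α γ R : Type*} [DecidableEq α] [DecidableEq γ] [CommRing R]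

/-- The gate applying `U` to the target conditionally on `p`. It is defined for an arbitrary matrix
`p`, although it is a controlled gate in the usual sense only when `p` is a projector. -/
def controlledGate (p : Matrix α α R) (U : Matrix γ γ R) : Matrix (α × γ) (α × γ) R :=
  p ⊗ₖ U + (1 - p) ⊗ₖ 1

lemma controlledGate_zero (U : Matrix γ γ R) : controlledGate (0 : Matrix α α R) U = 1 := by
  simp [controlledGate]

variable [Fintype α] [Fintype γ]

lemma controlledGate_mul_of_mul_eq_zero {p q : Matrix α α R} (h : p * q = 0) (U : Matrix γ γ R) :
    controlledGate p U * controlledGate q U = controlledGate (p + q) U := by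
  have left_only : p * (1 - q) = p := by rw [mul_sub, h, mul_one, sub_zero]
  have right_only : (1 - p) * q = q := by rw [sub_mul, h, one_mul, sub_zero]
  have neither : (1 - p) * (1 - q) = 1 - (p + q) := by rw [mul_sub, right_only, mul_one, sub_sub]
  calc controlledGate p U * controlledGate q U
      = (p * q) ⊗ₖ (U * U) + (p * (1 - q)) ⊗ₖ U
          + (((1 - p) * q) ⊗ₖ U + ((1 - p) * (1 - q)) ⊗ₖ 1) := by
        simp only [controlledGate, add_mul _ _ (_ + _), mul_add, ← mul_kronecker_mul, mul_one,
          one_mul]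
    _ = p ⊗ₖ U + (q ⊗ₖ U + (1 - (p + q)) ⊗ₖ 1) := by
        rw [h, left_only, right_only, neither, zero_kronecker, zero_add]
    _ = controlledGate (p + q) U := by
        rw [controlledGate, add_kronecker, add_assoc]

lemma list_prod_controlledGate {ps : List (Matrix α α R)} (hps : ps.Pairwise fun p q => p * q = 0)
    (U : Matrix γ γ R) :
    (ps.map fun p => controlledGate p U).prod = controlledGate ps.sum U := by
  induction ps with
  | nil => simp [controlledGate_zero]
  | cons p ps ih =>
    obtain ⟨hp, hps⟩ := List.pairwise_cons.mp hps
    have mul_sum_eq_zero : p * ps.sum = 0 := by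
      rw [← AddMonoidHom.coe_mulLeft, map_list_sum]
      exact List.sum_eq_zero (by simpa using hp)
    rw [List.map_cons, List.prod_cons, ih hps, controlledGate_mul_of_mul_eq_zero mul_sum_eq_zero,
      List.sum_cons]

lemma list_prod_controlledGate_single {l : List α} (hl : l.Nodup) (U : Matrix γ γ R) :
    (l.map fun a => controlledGate (single a a 1) U).prod
      = controlledGate (∑ a ∈ l.toFinset, single a a 1) U := by
  have orthogonal : (l.map fun a => single a a (1 : R)).Pairwise fun p q => p * q = 0 :=
    List.pairwise_map.mpr (hl.imp fun hab => single_mul_single_of_ne _ _ _ _ hab _)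
  rw [List.sum_toFinset _ hl, ← list_prod_controlledGate orthogonal, List.map_map,
    Function.comp_def]

end ControlledGate

section Subcube

variable {ι : Type*} {κ : ι → Type*} [Fintype ι] [DecidableEq ι] [∀ i, Fintype (κ i)]

/-- The subcube of strings that carry the pattern `c` on the coordinates in `F`, over an alphabet
`κ i` which may depend on the coordinate. Encoding it as a product set makes it easy to count. -/
def subcube (F : Finset ι) (c : ∀ i, κ i) : Finset (∀ i, κ i) :=
  Fintype.piFinset fun i => if i ∈ F then {c i} else Finset.univ

lemma mem_subcube {F : Finset ι} {b c : ∀ i, κ i} : b ∈ subcube F c ↔ ∀ i ∈ F, b i = c i := by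
  rw [subcube, Fintype.mem_piFinset]
  refine forall_congr' fun i => ?_
  split_ifs with hi <;> simp [hi]

lemma filter_eq_subcube (F : Finset ι) (c : ∀ i, κ i)
    [DecidablePred fun b : ∀ i, κ i => ∀ i ∈ F, b i = c i] :
    (Finset.univ.filter fun b : ∀ i, κ i => ∀ i ∈ F, b i = c i) = subcube F c := by
  ext b
  simp only [Finset.mem_filter, Finset.mem_univ, true_and, mem_subcube]

lemma card_subcube (F : Finset ι) (c : ∀ i, κ i) :
    (subcube F c).card = ∏ i ∈ Fᶜ, Fintype.card (κ i) := by
  have fixed : ∏ i ∈ F, (if i ∈ F then {c i} else Finset.univ).card = 1 :=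
    Finset.prod_eq_one fun i hi => by rw [if_pos hi, Finset.card_singleton]
  rw [subcube, Fintype.card_piFinset, ← Finset.prod_mul_prod_compl F, fixed, one_mul]
  exact Finset.prod_congr rfl fun i hi => by
    rw [if_neg (Finset.mem_compl.mp hi), Finset.card_univ]

lemma eq_subcube_of_card {F : Finset ι} {c : ∀ i, κ i} {S : Finset (∀ i, κ i)}
    (hcard : S.card = ∏ i ∈ Fᶜ, Fintype.card (κ i)) (hagree : ∀ a ∈ S, ∀ i ∈ F, a i = c i) :
    S = subcube F c :=
  Finset.eq_of_subset_of_card_le (fun a ha => mem_subcube.mpr (hagree a ha))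
    (by rw [card_subcube, hcard])

end Subcube

lemma ketBraProj_eq_single (P : ℕ) (a : Fin P → Bool) : ketBraProj P a = single a a 1 := by
  ext x y
  simp only [ketBraProj, of_apply, single_apply, eq_comm]

theorem ctrlU_composition_subcube_general
    {ι : Type*} [Fintype ι] [DecidableEq ι]
    {κ : ι → Type*} [∀ i, Fintype (κ i)] [∀ i, DecidableEq (κ i)]
    {R : Type*} [CommRing R] {γ : Type*} [Fintype γ] [DecidableEq γ] (U : Matrix γ γ R)
    (F : Finset ι) (S : Finset (∀ i, κ i)) (hScard : S.card = ∏ i ∈ Fᶜ, Fintype.card (κ i))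
    (c : ∀ i, κ i) (hagree : ∀ a ∈ S, ∀ i ∈ F, a i = c i)
    (l : List (∀ i, κ i)) (hl : l.Nodup) (hlS : l.toFinset = S) :
    (l.map fun a => controlledGate (single a a 1) U).prod
      = controlledGate (∑ b ∈ subcube F c, single b b 1) U := by
  rw [list_prod_controlledGate_single hl, hlS, eq_subcube_of_card hScard hagree]

/-- **Composition of controlled-`U` gates over a subcube of control strings.**
If the `2^n` control strings of `S` all agree on the `P - n` coordinates of `F`
(with common pattern `atil`), then the product over `S`, in any order, of the
gates `C_a(U)` equals `Q ⊗ U + (1 - Q) ⊗ 1`, where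
`Q = ∑_{b : b i = atil i ∀ i ∈ F} |b⟩⟨b|`: `2^n` controlled shifts combine into a
single shift controlled only on the fixed bits. -/
theorem ctrlU_composition_subcube
    (P n : ℕ) (hP : 1 ≤ P) (hn : 1 ≤ n) (hnP : n < P)
    {γ : Type*} [Fintype γ] [DecidableEq γ]
    (U : Matrix γ γ ℂ) (hU : U ∈ Matrix.unitaryGroup γ ℂ)
    (F : Finset (Fin P)) (hF : F.card = P - n)
    (S : Finset (Fin P → Bool)) (hScard : S.card = 2 ^ n)
    (atil : Fin P → Bool) (hagree : ∀ a ∈ S, ∀ i ∈ F, a i = atil i)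
    (l : List (Fin P → Bool)) (hl : l.Nodup) (hlS : l.toFinset = S) :
    (l.map fun a => ctrlU P a U).prod
      = (∑ b ∈ Finset.univ.filter fun b : Fin P → Bool => ∀ i ∈ F, b i = atil i,
            ketBraProj P b) ⊗ₖ U
        + (1 - ∑ b ∈ Finset.univ.filter fun b : Fin P → Bool => ∀ i ∈ F, b i = atil i,
            ketBraProj P b) ⊗ₖ 1 := by
  have hcard : S.card = ∏ _i ∈ Fᶜ, Fintype.card Bool := by
    simp only [hScard, Fintype.card_bool, Finset.prod_const, Finset.card_compl, Fintype.card_fin,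
      hF, Nat.sub_sub_self hnP.le]
  simpa only [ctrlU, controlledGate, ketBraProj_eq_single, filter_eq_subcube] using
    ctrlU_composition_subcube_general U F S hcard atil hagree l hl hlS
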